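/- arXiv:1702.04228 — 2 statements merged into one kernel-verified Lean document; each statement's English description precedes it below -/
import Mathlib

section
/- Degree theorem for possibly disconnected graphs: for any (D+1)-tuple σ of permutations of {1,…,k} there exists a nonnegative integer ω (the degree of σ, equal to the sum of the degrees of its connected components) such that 2·ω = (D−1)! · ( D(D−1)/2 · k + D·C(σ) − F(σ) ). In particular F(σ) ≤ D(D−1)/2 · k + D·C(σ). -/
/-- Number of cycles of a permutation counting fixed points: the number of orbits
on `Fin k` of the cyclic group generated by `τ`. -/
noncomputable def cycleCount {k : ℕ} (τ : Equiv.Perm (Fin k)) : ℕ :=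
  Nat.card (MulAction.orbitRel.Quotient (Subgroup.zpowers τ) (Fin k))

/-- Total number of faces of the `(D+1)`-colored graph encoded by `σ`:
`F(σ) = Σ_{c₁ < c₂} c(σ⁽ᶜ¹⁾ ∘ (σ⁽ᶜ²⁾)⁻¹)`. -/
noncomputable def faceCount {k D : ℕ} (σ : Fin (D + 1) → Equiv.Perm (Fin k)) : ℕ :=
  ∑ p ∈ Finset.univ.filter (fun p : Fin (D + 1) × Fin (D + 1) => p.1 < p.2),
    cycleCount (σ p.1 * (σ p.2)⁻¹)

/-- Number of connected components of the `(D+1)`-colored graph encoded by `σ`: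
the number of orbits on `Fin k` of the subgroup generated by `(σ⁽⁰⁾)⁻¹ ∘ σ⁽ᶜ⁾`, `1 ≤ c ≤ D`. -/
noncomputable def compCount {k D : ℕ} (σ : Fin (D + 1) → Equiv.Perm (Fin k)) : ℕ :=
  Nat.card (MulAction.orbitRel.Quotient
    (Subgroup.closure
      {g : Equiv.Perm (Fin k) | ∃ c : Fin (D + 1), c ≠ 0 ∧ g = (σ 0)⁻¹ * σ c}) (Fin k))

open Equiv Module

/-- Functions on `Fin k` that are invariant under every permutation in `S`. -/
def invariantFunctions {k : ℕ} (S : Set (Perm (Fin k))) : Submodule ℚ (Fin k → ℚ) where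
  carrier := {u | ∀ g ∈ S, ∀ x, u (g x) = u x}
  add_mem' hu hv g hg x := by simp [hu g hg x, hv g hg x]
  zero_mem' _ _ _ := rfl
  smul_mem' a u hu g hg x := by simp [hu g hg x]

theorem mem_invariantFunctions {k : ℕ} {S : Set (Perm (Fin k))} {u : Fin k → ℚ} :
    u ∈ invariantFunctions S ↔ ∀ g ∈ S, ∀ x, u (g x) = u x :=
  Iff.rfl

theorem apply_eq_of_mem_closure {k : ℕ} {S : Set (Perm (Fin k))} {u : Fin k → ℚ}
    (hu : u ∈ invariantFunctions S) {g : Perm (Fin k)} (hg : g ∈ Subgroup.closure S) (x : Fin k) :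
    u (g x) = u x := by
  induction hg using Subgroup.closure_induction generalizing x with
  | mem g hg => exact hu g hg x
  | one => rfl
  | mul g h _ _ ihg ihh => rw [Perm.mul_apply, ihg, ihh]
  | inv g _ ih => simpa using (ih (g⁻¹ x)).symm

/-- Invariant functions are the functions on the set of orbits. -/
noncomputable def invariantFunctionsEquiv {k : ℕ} (S : Set (Perm (Fin k))) :
    (MulAction.orbitRel.Quotient (Subgroup.closure S) (Fin k) → ℚ) ≃ₗ[ℚ] invariantFunctions S where
  toFun f := ⟨fun x => f (Quotient.mk _ x), fun g hg x => congrArg f <| Quotient.sound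
    ⟨⟨g, Subgroup.subset_closure hg⟩, rfl⟩⟩
  map_add' _ _ := rfl
  map_smul' _ _ := rfl
  invFun u := Quotient.lift u.1 (by
    rintro _ y ⟨g, rfl⟩
    exact apply_eq_of_mem_closure u.2 g.2 y)
  left_inv f := by
    ext q
    induction q using Quotient.inductionOn
    rfl
  right_inv _ := rfl

theorem finrank_invariantFunctions {k : ℕ} (S : Set (Perm (Fin k))) :
    finrank ℚ (invariantFunctions S) =
      Nat.card (MulAction.orbitRel.Quotient (Subgroup.closure S) (Fin k)) := by
  classical
  have : Finite (MulAction.orbitRel.Quotient (Subgroup.closure S) (Fin k)) :=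
    inferInstanceAs (Finite (Quotient _))
  have := Fintype.ofFinite (MulAction.orbitRel.Quotient (Subgroup.closure S) (Fin k))
  rw [← (invariantFunctionsEquiv S).finrank_eq, finrank_fintype_fun_eq_card,
    Nat.card_eq_fintype_card]

theorem cycleCount_eq_finrank {k : ℕ} (τ : Perm (Fin k)) :
    cycleCount τ = finrank ℚ (invariantFunctions {τ}) := by
  rw [finrank_invariantFunctions, cycleCount, Subgroup.zpowers_eq_closure]

/-- Functions on the white vertices that are constant on the connected components of the
colored graph encoded by `σ`. -/
def componentFunctions {k : ℕ} {ι : Type*} (σ : ι → Perm (Fin k)) : Submodule ℚ (Fin k → ℚ) :=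
  invariantFunctions {g | ∃ i j, g = (σ i)⁻¹ * σ j}

theorem mem_componentFunctions {k : ℕ} {ι : Type*} {σ : ι → Perm (Fin k)} {u : Fin k → ℚ} :
    u ∈ componentFunctions σ ↔ ∀ i j x, u ((σ i)⁻¹ x) = u ((σ j)⁻¹ x) := by
  constructor
  · intro hu i j x
    simpa using hu _ ⟨i, j, rfl⟩ ((σ j)⁻¹ x)
  · rintro hu _ ⟨i, j, rfl⟩ x
    simpa using hu i j (σ j x)

theorem componentFunctions_comp {k : ℕ} {ι κ : Type*} (σ : ι → Perm (Fin k)) (e : κ ≃ ι) :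
    componentFunctions (σ ∘ e) = componentFunctions σ := by
  ext u
  simp only [mem_componentFunctions, Function.comp_apply]
  exact e.forall_congr fun {_} => e.forall_congr fun {_} => Iff.rfl

theorem compCount_eq_finrank {k D : ℕ} (σ : Fin (D + 1) → Perm (Fin k)) :
    compCount σ = finrank ℚ (componentFunctions σ) := by
  rw [compCount, ← finrank_invariantFunctions]
  suffices h : invariantFunctions {g | ∃ c, c ≠ 0 ∧ g = (σ 0)⁻¹ * σ c} = componentFunctions σ by
    rw [h]
  ext u
  rw [mem_componentFunctions]
  constructor
  · intro hu
    have key : ∀ i x, u ((σ 0)⁻¹ x) = u ((σ i)⁻¹ x) := by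
      intro i x
      by_cases hi : i = 0
      · rw [hi]
      · simpa using hu _ ⟨i, hi, rfl⟩ ((σ i)⁻¹ x)
    intro i j x
    rw [← key i, key j]
  · rintro hu _ ⟨c, -, rfl⟩ x
    simpa using hu 0 c (σ c x)

theorem eq_of_forall_eq_add_one {n : ℕ} {α : Type*} {a : Fin (n + 1) → α}
    (h : ∀ i, a i = a (i + 1)) (i j : Fin (n + 1)) : a i = a j := by
  have key : ∀ i, a i = a 0 := by
    intro i
    induction i using Fin.induction with
    | zero => rfl
    | succ i ih => rw [← ih, h i.castSucc, Fin.coeSucc_eq_succ]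
  rw [key i, key j]

/-- Difference of the pull-backs of functions along the edges of two colors. -/
def pullbackSub {k : ℕ} (g h : Perm (Fin k)) : (Fin k → ℚ) →ₗ[ℚ] (Fin k → ℚ) :=
  LinearMap.funLeft ℚ ℚ g - LinearMap.funLeft ℚ ℚ h

theorem pullbackSub_apply {k : ℕ} (g h : Perm (Fin k)) (v : Fin k → ℚ) :
    pullbackSub g h v = v ∘ g - v ∘ h :=
  rfl

theorem finrank_range_pullbackSub {k : ℕ} (g h : Perm (Fin k)) :
    finrank ℚ (LinearMap.range (pullbackSub g h)) + cycleCount (g * h⁻¹) = k := by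
  have hker : LinearMap.ker (pullbackSub g h) = invariantFunctions {g * h⁻¹} := by
    ext v
    rw [LinearMap.mem_ker, pullbackSub_apply, sub_eq_zero, mem_invariantFunctions]
    constructor
    · rintro hv _ rfl x
      simpa using congrFun hv (h⁻¹ x)
    · intro hv
      ext x
      simpa using hv _ rfl (h x)
  rw [cycleCount_eq_finrank, ← hker, LinearMap.finrank_range_add_finrank_ker]
  simp

/-- The genus of a jacket is nonnegative. -/
theorem sum_cycleCount_cyclic_le {k n : ℕ} (σ : Fin (n + 1) → Perm (Fin k)) :
    ∑ i, cycleCount (σ i * (σ (i + 1))⁻¹) + 2 * k ≤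
      (n + 1) * k + 2 * finrank ℚ (componentFunctions σ) := by
  let W (i : Fin (n + 1)) := LinearMap.range (pullbackSub (σ i) (σ (i + 1)))
  let β : (Fin k → ℚ) →ₗ[ℚ] (∀ i, W i) :=
    LinearMap.pi fun i => (pullbackSub (σ i) (σ (i + 1))).rangeRestrict
  let δ : (∀ i, W i) →ₗ[ℚ] (Fin k → ℚ) := ∑ i, (W i).subtype ∘ₗ LinearMap.proj i
  have hβδ : LinearMap.range β ≤ LinearMap.ker δ := by
    rintro _ ⟨v, rfl⟩
    have hδ : δ (β v) = ∑ i, (v ∘ σ i - v ∘ σ (i + 1)) := by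
      simp [δ, β, LinearMap.sum_apply, pullbackSub_apply]
    rw [LinearMap.mem_ker, hδ, Finset.sum_sub_distrib, sub_eq_zero]
    exact (Equiv.sum_comp (Equiv.addRight 1) fun i => v ∘ σ i).symm
  have hβ : finrank ℚ (LinearMap.ker β) ≤ finrank ℚ (componentFunctions σ) := by
    have hmem : ∀ v ∈ LinearMap.ker β, LinearMap.funLeft ℚ ℚ (σ 0) v ∈ componentFunctions σ := by
      intro v hv
      have hstep : ∀ i, v ∘ σ i = v ∘ σ (i + 1) := by
        intro i
        have := congrArg Subtype.val (congrFun (LinearMap.mem_ker.1 hv) i)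
        exact sub_eq_zero.1 this
      have hconst := eq_of_forall_eq_add_one (a := fun i => v ∘ σ i) hstep
      rw [mem_componentFunctions]
      intro i j x
      have hi := congrFun (hconst 0 i) ((σ i)⁻¹ x)
      have hj := congrFun (hconst 0 j) ((σ j)⁻¹ x)
      simpa [LinearMap.funLeft_apply] using hi.trans (by simpa using hj.symm)
    refine LinearMap.finrank_le_finrank_of_injective
      (f := (LinearMap.funLeft ℚ ℚ (σ 0)).restrict hmem) ?_
    intro v w hvw
    exact Subtype.ext <| LinearMap.funLeft_injective_of_surjective ℚ ℚ _ (σ 0).surjective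
      (congrArg Subtype.val hvw)
  have hδ : finrank ℚ (LinearMap.range δ).dualAnnihilator ≤
      finrank ℚ (componentFunctions σ) := by
    let ev : Module.Dual ℚ (Fin k → ℚ) →ₗ[ℚ] (Fin k → ℚ) :=
      LinearMap.pi fun x => LinearMap.applyₗ (Pi.single x 1)
    have hmem : ∀ φ ∈ (LinearMap.range δ).dualAnnihilator, ev φ ∈ componentFunctions σ := by
      intro φ hφ
      rw [mem_componentFunctions]
      intro i j x
      refine eq_of_forall_eq_add_one (a := fun i => ev φ ((σ i)⁻¹ x)) (fun i => ?_) i j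
      have hsingle : ∀ g : Perm (Fin k),
          (Pi.single x 1 : Fin k → ℚ) ∘ g = Pi.single (g⁻¹ x) 1 := by
        intro g
        ext y
        simp [Pi.single_apply, Equiv.eq_symm_apply]
      have hW : (pullbackSub (σ i) (σ (i + 1)) (Pi.single x 1)) ∈ LinearMap.range δ := by
        refine ⟨Pi.single i ⟨_, LinearMap.mem_range_self _ (Pi.single x 1)⟩, ?_⟩
        simp only [δ, LinearMap.sum_apply, LinearMap.comp_apply, LinearMap.proj_apply]
        rw [Finset.sum_eq_single i]
        · simp
        · intro j _ hj
          simp [Pi.single_eq_of_ne hj]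
        · simp
      have := (Submodule.mem_dualAnnihilator φ).1 hφ _ hW
      rw [pullbackSub_apply, map_sub, sub_eq_zero, hsingle, hsingle] at this
      exact this
    refine LinearMap.finrank_le_finrank_of_injective (f := ev.restrict hmem) ?_
    intro φ ψ h
    refine Subtype.ext (LinearMap.pi_ext' fun x => LinearMap.ext_ring ?_)
    exact congrFun (congrArg Subtype.val h) x
  have hsum : ∑ i, finrank ℚ (W i) + ∑ i, cycleCount (σ i * (σ (i + 1))⁻¹) = (n + 1) * k := by
    rw [← Finset.sum_add_distrib, Finset.sum_congr rfl fun i _ => finrank_range_pullbackSub _ _]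
    simp
  have hrankβ := LinearMap.finrank_range_add_finrank_ker β
  have hrankδ := LinearMap.finrank_range_add_finrank_ker δ
  have hdual := Subspace.finrank_add_finrank_dualAnnihilator_eq (LinearMap.range δ)
  have hle := Submodule.finrank_mono hβδ
  rw [finrank_pi_fintype] at hrankδ
  rw [finrank_fintype_fun_eq_card, Fintype.card_fin] at hrankβ hdual
  omega

theorem exists_perm_apply_eq_apply_eq {α : Type*} [DecidableEq α] {i j i' j' : α} (h : i ≠ j)
    (h' : i' ≠ j') : ∃ e : Perm α, e i = i' ∧ e j = j' := by
  refine ⟨swap (swap i i' j) j' * swap i i', ?_, by simp⟩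
  rw [Perm.mul_apply, swap_apply_left]
  refine swap_apply_of_ne_of_ne (fun hne => h ?_) h'
  simpa using congrArg (swap i i') hne

/-- A bound on the cyclic sums of a function of two variables, over all cyclic orders, bounds
its sum over all off-diagonal pairs. -/
theorem sum_ne_le_of_forall_cyclic_sum_le {n : ℕ} (hn : 1 ≤ n)
    (f : Fin (n + 1) → Fin (n + 1) → ℕ) (B : ℕ)
    (h : ∀ e : Perm (Fin (n + 1)), ∑ i, f (e i) (e (i + 1)) ≤ B) :
    ∑ p ∈ Finset.univ.offDiag, f p.1 p.2 ≤ n * B := by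
  let S (i j : Fin (n + 1)) : ℕ := ∑ e : Perm (Fin (n + 1)), f (e i) (e j)
  have hS : ∀ i j i' j', i ≠ j → i' ≠ j' → S i j = S i' j' := by
    intro i j i' j' hij hij'
    obtain ⟨e, rfl, rfl⟩ := exists_perm_apply_eq_apply_eq hij hij'
    exact (Equiv.sum_comp (Equiv.mulRight e) fun e' : Perm (Fin (n + 1)) => f (e' i) (e' j)).symm
  have h01 : (0 : Fin (n + 1)) ≠ 1 := by
    obtain ⟨m, rfl⟩ := Nat.exists_eq_add_of_le' hn
    exact zero_ne_one
  have hcyc : (n + 1) * S 0 1 ≤ (n + 1).factorial * B := by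
    have hstep : ∀ i : Fin (n + 1), i ≠ i + 1 := fun i hi => h01 (by simpa using hi)
    calc (n + 1) * S 0 1 = ∑ i, S i (i + 1) := by
          rw [Finset.sum_congr rfl fun i _ => hS i (i + 1) 0 1 (hstep i) h01]
          simp
      _ = ∑ e : Perm (Fin (n + 1)), ∑ i, f (e i) (e (i + 1)) := Finset.sum_comm
      _ ≤ ∑ _e : Perm (Fin (n + 1)), B := Finset.sum_le_sum fun e _ => h e
      _ = (n + 1).factorial * B := by simp [Fintype.card_perm]
  have hoff : (n + 1) * n * S 0 1 =
      (n + 1).factorial * ∑ p ∈ Finset.univ.offDiag, f p.1 p.2 := by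
    calc (n + 1) * n * S 0 1
        = ∑ p ∈ (Finset.univ : Finset (Fin (n + 1))).offDiag, S p.1 p.2 := by
          rw [Finset.sum_congr rfl fun p hp =>
            hS p.1 p.2 0 1 (Finset.mem_offDiag.1 hp).2.2 h01]
          simp [Finset.offDiag_card, Nat.mul_add, Nat.add_mul]
      _ = ∑ e : Perm (Fin (n + 1)), ∑ p ∈ Finset.univ.offDiag, f (e p.1) (e p.2) :=
          Finset.sum_comm
      _ = ∑ _e : Perm (Fin (n + 1)), ∑ p ∈ Finset.univ.offDiag, f p.1 p.2 := by
          refine Finset.sum_congr rfl fun e _ => ?_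
          exact Finset.sum_equiv (Equiv.prodCongr e e) (by simp) (by simp)
      _ = (n + 1).factorial * ∑ p ∈ Finset.univ.offDiag, f p.1 p.2 := by
          simp [Fintype.card_perm]
  refine Nat.le_of_mul_le_mul_left ?_ (Nat.factorial_pos (n + 1))
  calc (n + 1).factorial * ∑ p ∈ Finset.univ.offDiag, f p.1 p.2
      = n * ((n + 1) * S 0 1) := by rw [← hoff]; ring
    _ ≤ n * ((n + 1).factorial * B) := Nat.mul_le_mul_left _ hcyc
    _ = (n + 1).factorial * (n * B) := by ring

theorem cycleCount_inv {k : ℕ} (τ : Perm (Fin k)) : cycleCount τ⁻¹ = cycleCount τ := by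
  rw [cycleCount, cycleCount, Subgroup.zpowers_inv]

theorem two_mul_faceCount {k D : ℕ} (σ : Fin (D + 1) → Perm (Fin k)) :
    2 * faceCount σ = ∑ p ∈ Finset.univ.offDiag, cycleCount (σ p.1 * (σ p.2)⁻¹) := by
  have hsplit : (Finset.univ : Finset (Fin (D + 1))).offDiag =
      Finset.univ.filter (fun p : Fin (D + 1) × Fin (D + 1) => p.1 < p.2) ∪
        Finset.univ.filter (fun p : Fin (D + 1) × Fin (D + 1) => p.2 < p.1) := by
    ext p
    simp [lt_or_lt_iff_ne]
  have hdisj : Disjoint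
      (Finset.univ.filter (fun p : Fin (D + 1) × Fin (D + 1) => p.1 < p.2))
      (Finset.univ.filter (fun p : Fin (D + 1) × Fin (D + 1) => p.2 < p.1)) :=
    Finset.disjoint_filter.2 fun p _ h => h.asymm
  rw [hsplit, Finset.sum_union hdisj, two_mul, faceCount]
  congr 1
  refine Finset.sum_equiv (Equiv.prodComm _ _) (by simp) fun p _ => ?_
  rw [← cycleCount_inv]
  simp

theorem two_mul_faceCount_le {k D : ℕ} (hD : 1 ≤ D) (σ : Fin (D + 1) → Perm (Fin k)) :
    2 * faceCount σ ≤ D * ((D - 1) * k + 2 * compCount σ) := by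
  rw [two_mul_faceCount]
  refine sum_ne_le_of_forall_cyclic_sum_le hD (fun i j => cycleCount (σ i * (σ j)⁻¹)) _ fun e => ?_
  have h := sum_cycleCount_cyclic_le (σ ∘ e)
  rw [componentFunctions_comp, ← compCount_eq_finrank] at h
  obtain ⟨m, rfl⟩ := Nat.exists_eq_add_of_le' hD
  simp only [Function.comp_apply] at h
  rw [Nat.add_sub_cancel]
  linarith

theorem faceCount_le {k D : ℕ} (hD : 1 ≤ D) (σ : Fin (D + 1) → Perm (Fin k)) :
    faceCount σ ≤ D * (D - 1) / 2 * k + D * compCount σ := by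
  have h := two_mul_faceCount_le hD σ
  have heven : D * (D - 1) / 2 * 2 = D * (D - 1) :=
    Nat.div_mul_cancel (Nat.even_mul_pred_self D).two_dvd
  generalize D * (D - 1) / 2 = E at heven ⊢
  rw [mul_add, ← mul_assoc, ← heven] at h
  linarith

theorem cycleCount_eq_card_add_card {k : ℕ} (τ : Perm (Fin k)) :
    cycleCount τ = (k - τ.support.card) + τ.cycleType.card := by
  let G (x : Fin k) : {x // x ∈ τ.supportᶜ} ⊕ {c // c ∈ τ.cycleFactorsFinset} :=
    if h : x ∈ τ.support then
      Sum.inr ⟨τ.cycleOf x, Perm.cycleOf_mem_cycleFactorsFinset_iff.2 h⟩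
    else Sum.inl ⟨x, Finset.mem_compl.2 h⟩
  have hsurj : Function.Surjective G := by
    rintro (⟨x, hx⟩ | ⟨c, hc⟩)
    · exact ⟨x, dif_neg (Finset.mem_compl.1 hx)⟩
    · obtain ⟨x, hx⟩ := (Perm.mem_cycleFactorsFinset_iff.1 hc).1.nonempty_support
      have hxτ := Perm.mem_cycleFactorsFinset_support_le hc hx
      refine ⟨x, ?_⟩
      simp only [G, dif_pos hxτ, Perm.cycle_is_cycleOf hx hc]
  have hker : MulAction.orbitRel (Subgroup.zpowers τ) (Fin k) = Setoid.ker G := by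
    ext x y
    have hsame : (MulAction.orbitRel (Subgroup.zpowers τ) (Fin k)) x y ↔ τ.SameCycle y x := by
      constructor
      · rintro ⟨⟨_, n, rfl⟩, h⟩
        exact ⟨n, h⟩
      · rintro ⟨n, h⟩
        exact ⟨⟨_, n, rfl⟩, h⟩
    rw [hsame, Setoid.ker_def]
    by_cases hx : x ∈ τ.support <;> by_cases hy : y ∈ τ.support <;>
      simp only [G, hx, hy, dif_pos, dif_neg, not_false_eq_true]
    · rw [Perm.sameCycle_comm, Perm.sameCycle_iff_cycleOf_eq_of_mem_support hx hy]
      simp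
    · simp only [reduceCtorEq, iff_false]
      intro h
      exact hy ((h.mem_support_iff).2 hx)
    · simp only [reduceCtorEq, iff_false]
      intro h
      exact hx ((h.mem_support_iff).1 hy)
    · rw [Perm.sameCycle_comm]
      simp only [Sum.inl.injEq, Subtype.mk.injEq]
      refine ⟨fun h => h.eq_of_left (Perm.notMem_support.1 hx), ?_⟩
      rintro rfl
      exact Perm.SameCycle.rfl
  rw [cycleCount, MulAction.orbitRel.Quotient, hker,
    Nat.card_congr (Setoid.quotientKerEquivOfSurjective G hsurj), Nat.card_eq_fintype_card,
    Fintype.card_sum, Fintype.card_coe, Fintype.card_coe, Finset.card_compl, Fintype.card_fin,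
    Perm.cycleType_def, Multiset.card_map, Finset.card_val]

theorem sign_eq_neg_one_pow_card_add_cycleCount {k : ℕ} (τ : Perm (Fin k)) :
    Perm.sign τ = (-1 : ℤˣ) ^ (k + cycleCount τ) := by
  have hle : τ.support.card ≤ k := by simpa using τ.support.card_le_univ
  rw [Perm.sign_of_cycleType, Perm.sum_cycleType, cycleCount_eq_card_add_card]
  refine neg_one_pow_congr ?_
  rw [Nat.even_iff, Nat.even_iff]
  omega

theorem even_add_faceCount {k : ℕ} (σ : Fin (2 + 1) → Perm (Fin k)) :
    Even (k + faceCount σ) := by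
  have hface : faceCount σ = cycleCount (σ 0 * (σ 1)⁻¹) + cycleCount (σ 0 * (σ 2)⁻¹) +
      cycleCount (σ 1 * (σ 2)⁻¹) := by
    have : Finset.univ.filter (fun p : Fin (2 + 1) × Fin (2 + 1) => p.1 < p.2) =
        {(0, 1), (0, 2), (1, 2)} := by decide
    rw [faceCount, this]
    simp [add_assoc]
  have hsign : Perm.sign (σ 0 * (σ 1)⁻¹) * Perm.sign (σ 0 * (σ 2)⁻¹) *
      Perm.sign (σ 1 * (σ 2)⁻¹) = 1 := by
    simp only [Perm.sign_mul, Perm.sign_inv]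
    rcases Int.units_eq_one_or (Perm.sign (σ 0)) with h0 | h0 <;>
    rcases Int.units_eq_one_or (Perm.sign (σ 1)) with h1 | h1 <;>
    rcases Int.units_eq_one_or (Perm.sign (σ 2)) with h2 | h2 <;> simp [h0, h1, h2]
  simp only [sign_eq_neg_one_pow_card_add_cycleCount, ← pow_add] at hsign
  have heven : Even _ := (neg_one_pow_eq_one_iff_even (by decide)).1 hsign
  rw [hface]
  rw [Nat.even_iff] at heven ⊢
  omega

/-- Degree theorem, possibly disconnected case: there is a nonnegative integer `ω`
(the degree of `σ`) with `2·ω = (D−1)! · (D(D−1)/2 · k + D·C(σ) − F(σ))`;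
in particular `F(σ) ≤ D(D−1)/2 · k + D·C(σ)`. -/
theorem degree_theorem (k D : ℕ) (hk : 1 ≤ k) (hD : 2 ≤ D)
    (σ : Fin (D + 1) → Equiv.Perm (Fin k)) :
    (∃ ω : ℕ, (2 : ℤ) * ω =
        (Nat.factorial (D - 1) : ℤ) *
          ((D * (D - 1) / 2 : ℕ) * k + D * compCount σ - (faceCount σ : ℤ))) ∧
      faceCount σ ≤ D * (D - 1) / 2 * k + D * compCount σ := by
  have hle := faceCount_le (one_le_two.trans hD) σ
  refine ⟨?_, hle⟩
  obtain ⟨m, hm⟩ := Nat.exists_eq_add_of_le hle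
  have hm' : ((D * (D - 1) / 2 : ℕ) * k + D * compCount σ - (faceCount σ : ℤ)) = m := by
    have : (((D * (D - 1) / 2 * k + D * compCount σ : ℕ)) : ℤ) = faceCount σ + m := by
      exact_mod_cast hm
    push_cast at this ⊢
    linarith
  rw [hm']
  have heven : 2 ∣ (D - 1).factorial * m := by
    rcases hD.eq_or_lt with rfl | hD
    · have hparity := even_add_faceCount σ
      rw [Nat.even_iff] at hparity
      refine Dvd.dvd.mul_left ?_ _
      norm_num at hm
      omega
    · exact (Nat.dvd_factorial two_pos (by omega)).mul_right m
  obtain ⟨ω, hω⟩ := heven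
  exact ⟨ω, by exact_mod_cast hω.symm⟩
end

section
/- Euler relation for jackets (connected case): if the (D+1)-colored graph encoded by σ is connected, i.e. C(σ) = 1, then for every cyclic permutation π of the color set {0,1,…,D} there exists a nonnegative integer g (the genus of the jacket J_π) such that F_π(σ) = (D−1)·k + 2 − 2g. In particular F_π(σ) ≤ (D−1)·k + 2 and F_π(σ) has the same parity as (D−1)·k. -/
/-- Face count of the jacket associated to the cyclic color permutation `π`:
`F_π(σ) = Σ_{q=0}^{D} c(σ^{(π^q(0))} ∘ (σ^{(π^{q+1}(0))})⁻¹)`. -/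
noncomputable def jacketFaceCount {k D : ℕ} (σ : Fin (D + 1) → Equiv.Perm (Fin k))
    (π : Equiv.Perm (Fin (D + 1))) : ℕ :=
  ∑ q ∈ Finset.range (D + 1),
    cycleCount (σ ((π ^ q) 0) * (σ ((π ^ (q + 1)) 0))⁻¹)

open Module

/-- If finitely many endomorphisms sum to zero, the dimensions of their ranges add up to at least
the codimension of the common kernel plus the dimension of the span of the ranges. -/
theorem finrank_add_finrank_iSup_range_le {K V ι : Type*} [Field K] [AddCommGroup V] [Module K V]
    [FiniteDimensional K V] [Fintype ι] (T : ι → V →ₗ[K] V) (hT : ∑ i, T i = 0) :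
    finrank K V + finrank K (⨆ i, LinearMap.range (T i) : Submodule K V) ≤
      ∑ i, finrank K (LinearMap.range (T i)) +
        finrank K (⨅ i, LinearMap.ker (T i) : Submodule K V) := by
  classical
  let β : V →ₗ[K] ((i : ι) → LinearMap.range (T i)) := LinearMap.pi fun i => (T i).rangeRestrict
  let δ : ((i : ι) → LinearMap.range (T i)) →ₗ[K] V :=
    ∑ i, (LinearMap.range (T i)).subtype ∘ₗ LinearMap.proj i
  have hδβ : LinearMap.range β ≤ LinearMap.ker δ := by
    rintro _ ⟨v, rfl⟩
    simpa [β, δ, LinearMap.sum_apply] using congrArg (fun f : V →ₗ[K] V => f v) hT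
  have hkerβ : LinearMap.ker β = ⨅ i, LinearMap.ker (T i) := by
    simp [β, LinearMap.ker_pi]
  have hrangeδ : (⨆ i, LinearMap.range (T i)) ≤ LinearMap.range δ := by
    refine iSup_le fun i v hv => ⟨Pi.single i ⟨v, hv⟩, ?_⟩
    simp only [δ, LinearMap.sum_apply, LinearMap.comp_apply, LinearMap.proj_apply,
      Submodule.subtype_apply]
    rw [Finset.sum_eq_single i]
    · simp
    · intro j _ hj
      simp [Pi.single_eq_of_ne hj]
    · simp
  have h₁ := β.finrank_range_add_finrank_ker
  have h₂ := δ.finrank_range_add_finrank_ker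
  rw [finrank_pi_fintype] at h₂
  have h₃ := Submodule.finrank_mono hδβ
  have h₄ := Submodule.finrank_mono hrangeδ
  rw [hkerβ] at h₁
  omega

/-- The number of cycles of `s * t⁻¹` is the dimension of the space of functions `f` with
`f ∘ t = f ∘ s`. -/
theorem finrank_ker_funLeft_sub {k : ℕ} (s t : Equiv.Perm (Fin k)) :
    finrank ℚ (LinearMap.ker (LinearMap.funLeft ℚ ℚ t - LinearMap.funLeft ℚ ℚ s)) =
      cycleCount (s * t⁻¹) := by
  classical
  let Q := MulAction.orbitRel.Quotient (Subgroup.zpowers (s * t⁻¹)) (Fin k)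
  let p : Fin k → Q := Quotient.mk _
  have hp : Function.Surjective p := Quotient.mk_surjective
  have hker : LinearMap.ker (LinearMap.funLeft ℚ ℚ t - LinearMap.funLeft ℚ ℚ s) =
      LinearMap.range (LinearMap.funLeft ℚ ℚ p) := by
    ext f
    rw [LinearMap.mem_ker, LinearMap.sub_apply, sub_eq_zero]
    constructor
    · intro hf
      have hinv : ∀ x, f ((s * t⁻¹) x) = f x := fun x => by
        simpa [LinearMap.funLeft_apply] using (congrFun hf (t⁻¹ x)).symm
      have hstab : ∀ g ∈ Subgroup.zpowers (s * t⁻¹), ∀ x, f (g x) = f x := by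
        intro g hg
        rw [Subgroup.zpowers_eq_closure] at hg
        induction hg using Subgroup.closure_induction with
        | mem g hg => rw [Set.mem_singleton_iff.1 hg]; exact hinv
        | one => simp
        | mul a b _ _ ha hb => intro x; rw [Equiv.Perm.mul_apply, ha, hb]
        | inv a _ ha => intro x; rw [← ha (a⁻¹ x)]; simp
      refine ⟨fun q => Quotient.liftOn q f ?_, ?_⟩
      · rintro _ y ⟨g, rfl⟩
        exact hstab g g.2 y
      · rfl
    · rintro ⟨f, rfl⟩
      ext x
      have hrel : MulAction.orbitRel (Subgroup.zpowers (s * t⁻¹)) (Fin k) (t x) (s x) :=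
        ⟨⟨(s * t⁻¹)⁻¹, inv_mem (Subgroup.mem_zpowers _)⟩, by simp [Subgroup.smul_def]⟩
      exact congrArg f (Quotient.sound hrel)
  rw [hker, LinearMap.finrank_range_of_inj (LinearMap.funLeft_injective_of_surjective ℚ ℚ p hp),
    finrank_fintype_fun_eq_card, cycleCount, Nat.card_eq_fintype_card]

theorem cycleCount_eq_card_cycleType_add {k : ℕ} (τ : Equiv.Perm (Fin k)) :
    cycleCount τ + τ.support.card = τ.cycleType.card + k := by
  classical
  let f : Fin k → Equiv.Perm (Fin k) ⊕ Fin k := fun x =>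
    if τ x = x then Sum.inr x else Sum.inl (τ.cycleOf x)
  have hf (x y : Fin k) : f x = f y ↔
      MulAction.orbitRel (Subgroup.zpowers τ) (Fin k) x y := by
    have horb : MulAction.orbitRel (Subgroup.zpowers τ) (Fin k) x y ↔ τ.SameCycle x y := by
      rw [Equiv.Perm.sameCycle_comm]
      constructor
      · rintro ⟨⟨_, n, rfl⟩, h⟩
        exact ⟨n, h⟩
      · rintro ⟨n, h⟩
        exact ⟨⟨τ ^ n, n, rfl⟩, h⟩
    rw [horb]
    by_cases hx : τ x = x
    · by_cases hy : τ y = y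
      · simp only [f, hx, hy, if_true, Sum.inr.injEq]
        exact ⟨fun h => h ▸ .refl _ _, fun h => h.eq_of_left hx⟩
      · simp only [f, hx, hy, if_true, if_false, reduceCtorEq, false_iff]
        exact fun h => hy (h.apply_eq_self_iff.1 hx)
    · by_cases hy : τ y = y
      · simp only [f, hx, hy, if_true, if_false, reduceCtorEq, false_iff]
        exact fun h => hx (h.apply_eq_self_iff.2 hy)
      · simp only [f, hx, hy, if_false, Sum.inl.injEq]
        exact (Equiv.Perm.sameCycle_iff_cycleOf_eq_of_mem_support (Equiv.Perm.mem_support.2 hx)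
          (Equiv.Perm.mem_support.2 hy)).symm
  have hrange : Set.range f = (τ.cycleFactorsFinset.disjSum τ.supportᶜ : Finset _) := by
    ext z
    rcases z with c | x
    · simp only [Set.mem_range, Finset.mem_coe, Finset.inl_mem_disjSum]
      constructor
      · rintro ⟨x, hx⟩
        by_cases h : τ x = x
        · simp [f, h] at hx
        · obtain rfl : τ.cycleOf x = c := by simpa [f, h] using hx
          exact Equiv.Perm.cycleOf_mem_cycleFactorsFinset_iff.2 (Equiv.Perm.mem_support.2 h)
      · intro hc
        obtain ⟨x, hx⟩ := (Equiv.Perm.mem_cycleFactorsFinset_iff.1 hc).1.nonempty_support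
        have h := Equiv.Perm.mem_support.1 (Equiv.Perm.mem_cycleFactorsFinset_support_le hc hx)
        exact ⟨x, by simp [f, h, Equiv.Perm.cycle_is_cycleOf hx hc]⟩
    · simp only [Set.mem_range, Finset.mem_coe, Finset.inr_mem_disjSum, Finset.mem_compl,
        Equiv.Perm.notMem_support]
      constructor
      · rintro ⟨y, hy⟩
        by_cases h : τ y = y
        · obtain rfl : y = x := by simpa [f, h] using hy
          exact h
        · simp [f, h] at hy
      · intro h
        exact ⟨x, by simp [f, h]⟩
  have hker : MulAction.orbitRel (Subgroup.zpowers τ) (Fin k) = Setoid.ker f :=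
    Setoid.ext fun x y => (hf x y).symm
  have hcard : cycleCount τ = τ.cycleFactorsFinset.card + τ.supportᶜ.card := by
    rw [cycleCount, MulAction.orbitRel.Quotient, hker,
      Nat.card_congr (Setoid.quotientKerEquivRange f), hrange, Nat.card_coe_set_eq,
      Set.ncard_coe_finset, Finset.card_disjSum]
  have hsupp := Finset.card_add_card_compl τ.support
  rw [Fintype.card_fin] at hsupp
  rw [hcard, Equiv.Perm.cycleType_def, Multiset.card_map, Finset.card_val]
  omega

theorem sign_eq_neg_one_pow_cycleCount {k : ℕ} (τ : Equiv.Perm (Fin k)) :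
    Equiv.Perm.sign τ = (-1) ^ (k + cycleCount τ) := by
  have h := cycleCount_eq_card_cycleType_add τ
  rw [Equiv.Perm.sign_of_cycleType, Equiv.Perm.sum_cycleType]
  apply neg_one_pow_congr
  rw [Nat.even_iff, Nat.even_iff]
  omega

/-- A function invariant under a set of permutations generating a transitive group is constant. -/
theorem eq_of_forall_apply_eq_of_card_quotient_eq_one {α β : Type*} {S : Set (Equiv.Perm α)}
    (hS : Nat.card (MulAction.orbitRel.Quotient (Subgroup.closure S) α) = 1)
    (f : α → β) (hf : ∀ g ∈ S, ∀ x, f (g x) = f x) (x y : α) : f x = f y := by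
  have hsub := (Nat.card_eq_one_iff_unique.1 hS).1
  obtain ⟨⟨g, hg⟩, rfl⟩ := Quotient.exact (hsub.elim (Quotient.mk _ x) (Quotient.mk _ y))
  change f (g y) = f y
  clear hsub
  induction hg using Subgroup.closure_induction generalizing y with
  | mem g hg => exact hf g hg y
  | one => rfl
  | mul a b _ _ ha hb => rw [Equiv.Perm.mul_apply, ha, hb]
  | inv a _ ha => rw [← ha (a⁻¹ y)]; simp

/-- The genus bound for a closed chain of permutations `s 0, …, s n = s 0` acting transitively. -/
theorem sum_cycleCount_add_two_mul_le {k n : ℕ} (s : ℕ → Equiv.Perm (Fin k)) (hs : s n = s 0)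
    (hconst : ∀ f : Fin k → ℚ, (∀ q < n, ∀ x, f ((s 0)⁻¹ (s q x)) = f x) → ∀ x y, f x = f y) :
    ∑ q ∈ Finset.range n, cycleCount (s q * (s (q + 1))⁻¹) + 2 * k ≤ n * k + 2 := by
  classical
  let B : ℕ → (Fin k → ℚ) →ₗ[ℚ] (Fin k → ℚ) := fun q => LinearMap.funLeft ℚ ℚ (s q)
  let T : Fin n → (Fin k → ℚ) →ₗ[ℚ] (Fin k → ℚ) := fun i => B (i + 1) - B i
  have hT : ∑ i, T i = 0 := by
    rw [Fin.sum_univ_eq_sum_range (fun q => B (q + 1) - B q) n, Finset.sum_range_sub]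
    simp [B, hs]
  have key := finrank_add_finrank_iSup_range_le T hT
  have hrank (i : Fin n) :
      finrank ℚ (LinearMap.range (T i)) + cycleCount (s i * (s (i + 1))⁻¹) = k := by
    rw [← finrank_ker_funLeft_sub]
    simpa using (T i).finrank_range_add_finrank_ker
  have hsum : ∑ i, finrank ℚ (LinearMap.range (T i)) +
      ∑ q ∈ Finset.range n, cycleCount (s q * (s (q + 1))⁻¹) = n * k := by
    rw [← Fin.sum_univ_eq_sum_range (fun q => cycleCount (s q * (s (q + 1))⁻¹)) n,
      ← Finset.sum_add_distrib, Finset.sum_congr rfl fun i _ => hrank i]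
    simp
  have hker : finrank ℚ (⨅ i, LinearMap.ker (T i) : Submodule ℚ (Fin k → ℚ)) ≤ 1 := by
    refine (Submodule.finrank_mono (t := ℚ ∙ (fun _ => 1 : Fin k → ℚ)) ?_).trans
      (finrank_span_le_card _ |>.trans (by simp))
    intro f hf
    have hstep : ∀ q ≤ n, B q f = B 0 f := by
      intro q
      induction q with
      | zero => simp
      | succ q ih =>
        intro hq
        rw [← ih (by omega)]
        simpa [T, sub_eq_zero] using (Submodule.mem_iInf _).1 hf ⟨q, hq⟩
    have hc := hconst (fun x => f (s 0 x)) fun q hq x => by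
      simpa [B, LinearMap.funLeft_apply] using congrFun (hstep q hq.le) x
    rw [Submodule.mem_span_singleton]
    rcases isEmpty_or_nonempty (Fin k) with _ | ⟨⟨x₀⟩⟩
    · exact ⟨0, Subsingleton.elim _ _⟩
    · refine ⟨f x₀, funext fun x => ?_⟩
      simpa using hc ((s 0)⁻¹ x₀) ((s 0)⁻¹ x)
  have hrange : k ≤ finrank ℚ (⨆ i, LinearMap.range (T i) : Submodule ℚ (Fin k → ℚ)) + 1 := by
    have hann : finrank ℚ (⨆ i, LinearMap.range (T i) : Submodule ℚ (Fin k → ℚ)).dualAnnihilator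
        ≤ 1 := by
      refine (Submodule.finrank_mono
        (t := ℚ ∙ (∑ x, LinearMap.proj x : Dual ℚ (Fin k → ℚ))) ?_).trans
        (finrank_span_le_card _ |>.trans (by simp))
      intro φ hφ
      have hstep : ∀ q ≤ n, φ ∘ₗ B q = φ ∘ₗ B 0 := by
        intro q
        induction q with
        | zero => simp
        | succ q ih =>
          intro hq
          rw [← ih (by omega)]
          ext1 x
          have hmem := (Submodule.mem_dualAnnihilator φ).1 hφ _
            (le_iSup (fun i => LinearMap.range (T i)) ⟨q, hq⟩ ⟨LinearMap.single ℚ _ x 1, rfl⟩)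
          ext
          simpa [T, sub_eq_zero] using hmem
      have hB (q : ℕ) (x : Fin k) : B q (Pi.single (s q x) 1) = Pi.single x 1 := by
        ext y
        simp [B, LinearMap.funLeft_apply, Pi.single_apply]
      have hc := hconst (fun x => φ (Pi.single x 1)) fun q hq x => by
        have h := LinearMap.congr_fun (hstep q hq.le) (Pi.single (s q x) 1)
        have h0 := hB 0 ((s 0)⁻¹ (s q x))
        rw [← Equiv.Perm.mul_apply, mul_inv_cancel, Equiv.Perm.one_apply] at h0
        rw [LinearMap.comp_apply, LinearMap.comp_apply, hB, h0] at h
        exact h.symm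
      rw [Submodule.mem_span_singleton]
      rcases isEmpty_or_nonempty (Fin k) with _ | ⟨⟨x₀⟩⟩
      · exact ⟨0, LinearMap.ext fun v => by simp [Subsingleton.elim v 0]⟩
      · refine ⟨φ (Pi.single x₀ 1), LinearMap.pi_ext' fun x => LinearMap.ext_ring ?_⟩
        simpa [LinearMap.sum_apply, Pi.single_apply] using hc x₀ x
    have h := Subspace.finrank_add_finrank_dualAnnihilator_eq
      (⨆ i, LinearMap.range (T i) : Submodule ℚ (Fin k → ℚ))
    rw [finrank_fin_fun] at h
    omega
  rw [finrank_fin_fun] at key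
  omega

theorem even_mul_add_sum_cycleCount {k n : ℕ} (s : ℕ → Equiv.Perm (Fin k)) (hs : s n = s 0) :
    Even (n * k + ∑ q ∈ Finset.range n, cycleCount (s q * (s (q + 1))⁻¹)) := by
  have hprod (m : ℕ) : Equiv.Perm.sign (s 0 * (s m)⁻¹) =
      (-1) ^ (m * k + ∑ q ∈ Finset.range m, cycleCount (s q * (s (q + 1))⁻¹)) := by
    induction m with
    | zero => simp
    | succ m ih =>
      have h : s 0 * (s (m + 1))⁻¹ = s 0 * (s m)⁻¹ * (s m * (s (m + 1))⁻¹) := by group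
      rw [h, map_mul, ih, sign_eq_neg_one_pow_cycleCount, ← pow_add, Finset.sum_range_succ]
      congr 1
      ring
  have h := hprod n
  rw [hs, mul_inv_cancel, map_one] at h
  by_contra hodd
  rw [Nat.not_even_iff_odd] at hodd
  rw [hodd.neg_one_pow] at h
  exact absurd h (by decide)

/-- Euler relation for jackets (connected case): if the graph encoded by `σ` is connected
then for every cyclic permutation `π` of the colors there is a nonnegative integer `g`
(the genus of the jacket `J_π`) with `F_π(σ) = (D−1)·k + 2 − 2g`; in particular
`F_π(σ) ≤ (D−1)·k + 2` and `F_π(σ)` has the same parity as `(D−1)·k`. -/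
theorem jacket_euler_connected (k D : ℕ) (hk : 1 ≤ k) (hD : 2 ≤ D)
    (σ : Fin (D + 1) → Equiv.Perm (Fin k)) (hconn : compCount σ = 1)
    (π : Equiv.Perm (Fin (D + 1))) (hcyc : π.IsCycle) (hsupp : π.support = Finset.univ) :
    (∃ g : ℕ, (jacketFaceCount σ π : ℤ) = (D - 1 : ℤ) * k + 2 - 2 * g) ∧
      jacketFaceCount σ π ≤ (D - 1) * k + 2 ∧
      jacketFaceCount σ π % 2 = ((D - 1) * k) % 2 := by
  have hord : orderOf π = D + 1 := by rw [hcyc.orderOf, hsupp]; simp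
  let s : ℕ → Equiv.Perm (Fin k) := fun q => σ ((π ^ q) 0)
  have hs : s (D + 1) = s 0 := by simp [s, ← hord, pow_orderOf_eq_one]
  have hmem (c : Fin (D + 1)) : π c ≠ c := by
    rw [← Equiv.Perm.mem_support, hsupp]; exact Finset.mem_univ c
  have hle := sum_cycleCount_add_two_mul_le s hs fun f hf =>
    eq_of_forall_apply_eq_of_card_quotient_eq_one hconn f <| by
      rintro _ ⟨c, -, rfl⟩ x
      obtain ⟨m, rfl⟩ := hcyc.exists_pow_eq (hmem 0) (hmem c)
      have h := hf (m % (D + 1)) (Nat.mod_lt _ D.succ_pos) x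
      rw [← hord] at h
      simpa [s, pow_mod_orderOf] using h
  have heven := even_mul_add_sum_cycleCount s hs
  change jacketFaceCount σ π + 2 * k ≤ _ at hle
  change Even (_ + jacketFaceCount σ π) at heven
  obtain ⟨d, rfl⟩ : ∃ d, D = d + 1 := ⟨D - 1, by omega⟩
  have hexp : (d + 1 + 1) * k = d * k + 2 * k := by ring
  rw [hexp] at hle heven
  rw [Nat.even_iff] at heven
  have hcast : (((d + 1 : ℕ) : ℤ) - 1) * k = ((d * k : ℕ) : ℤ) := by push_cast; ring
  rw [hcast, Nat.add_sub_cancel]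
  refine ⟨⟨(d * k + 2 - jacketFaceCount σ π) / 2, ?_⟩, ?_, ?_⟩ <;> omega
end
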